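/- Invariance of the NEIS denominator under pushforward of the base potential along the flow (Lemma E.3). Let b be an admissible vector field with global flow X and Jacobian factor J, let U0 : ℝ^d → ℝ be continuous, and fix τ ∈ ℝ. Define U^τ : ℝ^d → ℝ by U^τ(x) := U0(X (−τ) x) − log(J (−τ) x). Then for every x ∈ ℝ^d, with both sides interpreted as Lebesgue integrals of nonnegative functions (values in [0,∞]): ∫_ℝ exp(−U^τ(X t x)) · J t x dt = ∫_ℝ exp(−U0(X t x)) · J t x dt. -/

import Mathlib

/-!
The Jacobian factor is a multiplicative cocycle over the flow: the integral of the divergence along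
the orbit of `x` splits at time `t`, and the part after `t` is an integral along the orbit of
`X t x`. The weight `exp (-Uτ)` is `exp (-U0) ∘ X (-τ)` times `J (-τ)`, so the cocycle identity
turns the left integrand at time `t` into the right integrand at time `t - τ`, and Lebesgue measure
is translation invariant.
-/

open MeasureTheory Filter

noncomputable section

/-- Euclidean state space ℝ^d. -/
abbrev Euc (d : ℕ) := EuclideanSpace ℝ (Fin d)

/-- Divergence of a vector field: trace of the Fréchet derivative. -/
def vdiv {d : ℕ} (b : Euc d → Euc d) (x : Euc d) : ℝ :=
  LinearMap.trace ℝ (Euc d) (fderiv ℝ b x).toLinearMap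

/-- A vector field is admissible if it is C¹ with globally bounded derivative. -/
def Admissible {d : ℕ} (b : Euc d → Euc d) : Prop :=
  ContDiff ℝ 1 b ∧ ∃ C : ℝ, ∀ x, ‖fderiv ℝ b x‖ ≤ C

/-- A global flow of the vector field `b`. -/
def IsGlobalFlow {d : ℕ} (b : Euc d → Euc d) (X : ℝ → Euc d → Euc d) : Prop :=
  (∀ x, X 0 x = x) ∧
  (∀ t s : ℝ, ∀ x, X (t + s) x = X t (X s x)) ∧
  (∀ x : Euc d, ∀ t : ℝ, HasDerivAt (fun τ => X τ x) (b (X t x)) t)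

/-- Jacobian factor of the flow: J t x = exp(∫₀ᵗ div b(X s x) ds). -/
def Jac {d : ℕ} (b : Euc d → Euc d) (X : ℝ → Euc d → Euc d) (t : ℝ) (x : Euc d) : ℝ :=
  Real.exp (∫ s in (0:ℝ)..t, vdiv b (X s x))

section Cocycle

variable {G α M : Type*}

/-- `J` is a multiplicative cocycle over the time evolution `X`: the multiplier picked up over time
`s + t` is the one over time `t` from `x` times the one over time `s` from `X t x`. This is the
property of the Jacobian factor of a flow that the change of base potential relies on. -/
def IsMulCocycle [Add G] [Mul M] (X : G → α → α) (J : G → α → M) : Prop :=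
  ∀ s t x, J (s + t) x = J s (X t x) * J t x

theorem IsMulCocycle.transport_mul [Add G] [Semigroup M] {X : G → α → α} {J : G → α → M}
    (hJ : IsMulCocycle X J) (hX : ∀ s t x, X (s + t) x = X s (X t x)) (f : α → M) (s t : G)
    (x : α) : f (X s (X t x)) * J s (X t x) * J t x = f (X (s + t) x) * J (s + t) x := by
  rw [hX, hJ, mul_assoc]

end Cocycle

theorem intervalIntegral_orbit_add {α E : Type*} [NormedAddCommGroup E] [NormedSpace ℝ E]
    {X : ℝ → α → α} {x : α} (hX : ∀ s t, X (s + t) x = X s (X t x)) {g : α → E}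
    (hg : ∀ u v, IntervalIntegrable (fun r => g (X r x)) volume u v) (s t : ℝ) :
    ∫ r in (0 : ℝ)..(s + t), g (X r x) =
      (∫ r in (0 : ℝ)..s, g (X r (X t x))) + ∫ r in (0 : ℝ)..t, g (X r x) := by
  have shift : ∫ r in (0 : ℝ)..s, g (X r (X t x)) = ∫ r in t..(s + t), g (X r x) := by
    simp_rw [← hX]
    rw [intervalIntegral.integral_comp_add_right (fun r => g (X r x)) t, zero_add]
  rw [shift, add_comm (∫ r in t..(s + t), g (X r x)),
    intervalIntegral.integral_add_adjacent_intervals (hg 0 t) (hg t (s + t))]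

section Jacobian

variable {d : ℕ} {b : Euc d → Euc d} {X : ℝ → Euc d → Euc d}

theorem continuous_vdiv (hb : ContDiff ℝ 1 b) : Continuous (vdiv b) := by
  have continuous_trace :
      Continuous (LinearMap.trace ℝ (Euc d) ∘ₗ
        (ContinuousLinearMap.coeLM ℝ : (Euc d →L[ℝ] Euc d) →ₗ[ℝ] Euc d →ₗ[ℝ] Euc d)) :=
    LinearMap.continuous_of_finiteDimensional _
  exact continuous_trace.comp (hb.continuous_fderiv one_ne_zero)

theorem IsGlobalFlow.continuous_orbit (hX : IsGlobalFlow b X) (x : Euc d) :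
    Continuous fun t => X t x :=
  continuous_iff_continuousAt.2 fun t => (hX.2.2 x t).continuousAt

theorem jac_pos (b : Euc d → Euc d) (X : ℝ → Euc d → Euc d) (t : ℝ) (x : Euc d) :
    0 < Jac b X t x :=
  Real.exp_pos _

theorem isMulCocycle_jac (hb : ContDiff ℝ 1 b) (hX : IsGlobalFlow b X) :
    IsMulCocycle X (Jac b X) := by
  intro s t x
  have hdiv : Continuous fun r => vdiv b (X r x) :=
    (continuous_vdiv hb).comp (hX.continuous_orbit x)
  rw [Jac, Jac, Jac, ← Real.exp_add,
    intervalIntegral_orbit_add (fun s t => hX.2.1 s t x) hdiv.intervalIntegrable]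

end Jacobian

theorem exp_neg_sub_log (u : ℝ) {j : ℝ} (hj : 0 < j) :
    Real.exp (-(u - Real.log j)) = Real.exp (-u) * j := by
  rw [neg_sub, sub_eq_neg_add, Real.exp_add, Real.exp_log hj]

theorem stmt_11_general {G α : Type*} [AddGroup G] [MeasurableSpace G] [MeasurableAdd G]
    (μ : Measure G) [μ.IsAddLeftInvariant] {X : G → α → α}
    (hX : ∀ s t x, X (s + t) x = X s (X t x)) {J : G → α → ℝ} (hJ : IsMulCocycle X J)
    (hJpos : ∀ t x, 0 < J t x) (U0 : α → ℝ) (τ : G) (Uτ : α → ℝ)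
    (hUτ : ∀ x, Uτ x = U0 (X (-τ) x) - Real.log (J (-τ) x)) (x : α) :
    ∫⁻ t, ENNReal.ofReal (Real.exp (-(Uτ (X t x))) * J t x) ∂μ =
      ∫⁻ t, ENNReal.ofReal (Real.exp (-(U0 (X t x))) * J t x) ∂μ := by
  have integrand_eq (t : G) : Real.exp (-(Uτ (X t x))) * J t x =
      Real.exp (-(U0 (X (-τ + t) x))) * J (-τ + t) x := by
    rw [hUτ, exp_neg_sub_log _ (hJpos _ _), hJ.transport_mul hX fun y => Real.exp (-(U0 y))]
  simp_rw [integrand_eq]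
  exact lintegral_add_left_eq_self
    (fun t => ENNReal.ofReal (Real.exp (-(U0 (X t x))) * J t x)) (-τ)

/-- Invariance of the NEIS denominator under pushforward of the base potential
along the flow (Lemma E.3). -/
theorem stmt_11 {d : ℕ} (hd : 0 < d)
    (b : Euc d → Euc d) (hb : Admissible b)
    (X : ℝ → Euc d → Euc d) (hX : IsGlobalFlow b X)
    (U0 : Euc d → ℝ) (hU0c : Continuous U0) (τ : ℝ)
    (Uτ : Euc d → ℝ)
    (hUτ : ∀ x, Uτ x = U0 (X (-τ) x) - Real.log (Jac b X (-τ) x)) :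
    ∀ x : Euc d,
      (∫⁻ t : ℝ, ENNReal.ofReal (Real.exp (-(Uτ (X t x))) * Jac b X t x)) =
        ∫⁻ t : ℝ, ENNReal.ofReal (Real.exp (-(U0 (X t x))) * Jac b X t x) :=
  stmt_11_general volume hX.2.1 (isMulCocycle_jac hb.1 hX) (jac_pos b X) U0 τ Uτ hUτ
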